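/- arXiv:0808.3064 — 2 statements merged into one kernel-verified Lean document; each statement's English description precedes it below -/
import Mathlib

section
/- Under hypotheses (i) and (ii), the contraction identity Σ_ν σ^{μν}·γ_ν = ((n−1)/2)·γ^μ holds for every μ ∈ Fin n (the sum is over ν ∈ Fin n, and (n−1)/2 is a complex scalar). -/
/-!
The claim follows from `2 σ^{μν} γ_ν = [σ^{μν}, γ_ν] + {σ^{μν}, γ_ν}`, summed over `ν`.

* By the constancy condition, the commutators sum to `n γ^μ - γ^μ`, because `∑ ḡ_{νρ} g^{ρν} = n`
  and `∑ ḡ_{νρ} g^{ρμ} γ^ν = γ^μ`.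
* The anticommutator `T^{ρμν} = {γ^ρ, σ^{μν}}` is antisymmetric in its first two and in its last two
  indices, hence in `ρ, ν`. The inverse metric `ḡ` is symmetric, so `∑ ḡ_{νρ} T^{ρμν} = 0`
  (`sum_smul_eq_zero_of_symm_of_antisymm`).
-/

open Matrix BigOperators

theorem inverse_symm {n : ℕ} {g ginv : Fin n → Fin n → ℂ}
    (hg_symm : ∀ μ ν, g μ ν = g ν μ)
    (hg_inv' : ∀ μ ν, ∑ κ, ginv μ κ * g κ ν = if μ = ν then (1 : ℂ) else 0)
    (μ ν : Fin n) : ginv μ ν = ginv ν μ := by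
  have h1 : Matrix.of ginv * Matrix.of g = 1 := by
    ext i j
    simp [Matrix.mul_apply, Matrix.one_apply, hg_inv']
  have h2 : Matrix.of g * (Matrix.of ginv)ᵀ = 1 := by
    ext i j
    have h := hg_inv' j i
    simp only [Matrix.mul_apply, Matrix.one_apply, Matrix.transpose_apply, Matrix.of_apply]
    rw [show (if i = j then (1 : ℂ) else 0) = if j = i then 1 else 0 by simp only [eq_comm], ← h]
    exact Finset.sum_congr rfl fun κ _ => by rw [hg_symm i κ, mul_comm]
  have h := left_inv_eq_right_inv h1 h2
  exact congrFun (congrFun h μ) ν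

/-- The full contraction of a symmetric array with an antisymmetric one vanishes. -/
theorem sum_smul_eq_zero_of_symm_of_antisymm {n : ℕ} {V : Type*} [AddCommGroup V] [Module ℂ V]
    (a : Fin n → Fin n → ℂ) (T : Fin n → Fin n → V)
    (ha : ∀ i j, a i j = a j i) (hT : ∀ i j, T i j = - T j i) :
    ∑ i, ∑ j, a i j • T i j = 0 := by
  have h : ∑ i, ∑ j, a i j • T i j = - ∑ i, ∑ j, a i j • T i j := by
    conv_lhs => rw [Finset.sum_comm]
    simp only [← Finset.sum_neg_distrib]
    refine Finset.sum_congr rfl fun i _ => Finset.sum_congr rfl fun j _ => ?_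
    rw [ha j i, hT j i, smul_neg]
  have h2 : (2 : ℂ) • ∑ i, ∑ j, a i j • T i j = 0 := by
    rw [two_smul]
    nth_rewrite 1 [h]
    exact neg_add_cancel _
  exact (smul_eq_zero.mp h2).resolve_left two_ne_zero

theorem stmt_1
    (n N : ℕ) (hn : 1 ≤ n) (hN : 1 ≤ N)
    (g ginv : Fin n → Fin n → ℂ)
    (hg_symm : ∀ μ ν, g μ ν = g ν μ)
    (hg_inv : ∀ μ ν, ∑ κ, g μ κ * ginv κ ν = if μ = ν then (1 : ℂ) else 0)
    (hg_inv' : ∀ μ ν, ∑ κ, ginv μ κ * g κ ν = if μ = ν then (1 : ℂ) else 0)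
    (γ : Fin n → Matrix (Fin N) (Fin N) ℂ)
    (σ : Fin n → Fin n → Matrix (Fin N) (Fin N) ℂ)
    (hσ_anti : ∀ α β, σ α β = - σ β α)
    (hconst : ∀ μ s b, σ s b * γ μ - γ μ * σ s b = g μ b • γ s - g μ s • γ b)
    (hanti : ∀ μ s b, (γ μ * σ s b + σ s b * γ μ) + (γ s * σ μ b + σ μ b * γ s) = 0) :
    ∀ μ : Fin n,
      ∑ ν, σ μ ν * (∑ ρ, ginv ν ρ • γ ρ) = (((n : ℂ) - 1) / 2) • γ μ := by
  intro μ
  have hsymm := inverse_symm hg_symm hg_inv'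
  have hT : ∑ ν, ∑ ρ, ginv ν ρ • (γ ρ * σ μ ν + σ μ ν * γ ρ) = 0 := by
    refine sum_smul_eq_zero_of_symm_of_antisymm ginv
      (fun ν ρ => γ ρ * σ μ ν + σ μ ν * γ ρ) hsymm fun ν ρ => ?_
    -- `T^{ρμν} = -T^{μρν} = T^{μνρ} = -T^{νμρ}`
    have h1 := hanti ρ μ ν
    have h2 := hanti ν μ ρ
    rw [hσ_anti ν ρ] at h2
    simp only [mul_neg, neg_mul] at h2
    rw [eq_neg_iff_add_eq_zero]
    calc _ = _ := ?_
      _ = (0 : Matrix (Fin N) (Fin N) ℂ) + 0 := congrArg₂ (· + ·) h1 h2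
      _ = 0 := add_zero 0
    abel
  have hC : ∑ ν, ∑ ρ, ginv ν ρ • (g ρ ν • γ μ - g ρ μ • γ ν) = ((n : ℂ) - 1) • γ μ := by
    simp only [smul_sub, smul_smul, Finset.sum_sub_distrib, ← Finset.sum_smul, hg_inv']
    simp [sub_smul]
  have hsum : (2 : ℂ) • ∑ ν, σ μ ν * (∑ ρ, ginv ν ρ • γ ρ) = ((n : ℂ) - 1) • γ μ := by
    rw [← hC, ← add_zero (∑ ν, ∑ ρ, ginv ν ρ • (g ρ ν • γ μ - g ρ μ • γ ν)), ← hT]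
    simp only [← Finset.sum_add_distrib, Finset.mul_sum, Finset.smul_sum]
    refine Finset.sum_congr rfl fun ν _ => Finset.sum_congr rfl fun ρ _ => ?_
    rw [← hconst ρ μ ν, ← smul_add, mul_smul_comm, smul_comm, two_smul]
    congr 1
    abel
  rw [div_eq_inv_mul, mul_smul, ← hsum, smul_smul, inv_mul_cancel₀ two_ne_zero, one_smul]
end

section
/- Under hypotheses (i) and (ii), for all α, β ∈ Fin n one has (n−2)·[γ^β, γ^α] = Σ_ν σ^{βν}·[γ_ν, γ^α] − Σ_ν σ^{αν}·[γ_ν, γ^β], where the sums are over ν ∈ Fin n. -/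
open Matrix BigOperators

/-!
Write `γ_ν = ∑ ρ, ginv ν ρ • γ ρ`. The key fact is the contraction `∑ ν, σ β ν * γ_ν = ((n - 1) / 2) • γ β`
(`two_smul_contraction`): the sum of the two orderings `∑ ν, σ β ν * γ_ν` and `∑ ν, γ_ν * σ β ν`
contracts the totally antisymmetric array `{γ ρ, σ β ν}` with the symmetric `ginv`, hence vanishes,
while their difference is the constancy condition contracted with `ginv`, which is `(n - 1) • γ β`.

Expanding the commutators on the right-hand side of the theorem, the terms ending in `γ α` or `γ β`
are contractions already. In the remaining terms, the constancy condition, antisymmetrized in `α`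
and `β`, moves `γ α` to the left of `σ β ν`, so that they become contractions too; the corrections
contribute `-[γ β, γ α]`. The total is `(2 * ((n - 1) / 2) - 1) • [γ β, γ α] = (n - 2) • [γ β, γ α]`.
-/

theorem ginv_symm {n : ℕ} {g ginv : Fin n → Fin n → ℂ}
    (hg_symm : ∀ μ ν, g μ ν = g ν μ)
    (hg_inv : ∀ μ ν, ∑ κ, g μ κ * ginv κ ν = if μ = ν then (1 : ℂ) else 0)
    (μ ν : Fin n) : ginv μ ν = ginv ν μ := by
  have h1 : Matrix.of g * Matrix.of ginv = 1 := by
    ext i j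
    simp [Matrix.mul_apply, Matrix.one_apply, hg_inv]
  have h2 : (Matrix.of ginv)ᵀ * Matrix.of g = 1 := by
    have h3 : (Matrix.of g)ᵀ = Matrix.of g := by
      ext i j
      simp [hg_symm i j]
    rw [← h3, ← Matrix.transpose_mul, h1, Matrix.transpose_one]
  have h4 := left_inv_eq_right_inv h2 h1
  exact (congrFun (congrFun h4 ν) μ)

/-- Raising the index of the lowered family `γ_ν` gives back `γ`. -/
theorem raise_lower {n N : ℕ} {g ginv : Fin n → Fin n → ℂ}
    (hg_inv : ∀ μ ν, ∑ κ, g μ κ * ginv κ ν = if μ = ν then (1 : ℂ) else 0)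
    (γ : Fin n → Matrix (Fin N) (Fin N) ℂ) (α : Fin n) :
    ∑ ν, g α ν • ∑ ρ, ginv ν ρ • γ ρ = γ α := by
  simp only [Finset.smul_sum, smul_smul]
  rw [Finset.sum_comm]
  simp [← Finset.sum_smul, hg_inv]

/-- The contraction `∑ ν, σ β ν * γ_ν` equals `((n - 1) / 2) • γ β`, with the denominator cleared. -/
theorem two_smul_contraction {n N : ℕ} {g ginv : Fin n → Fin n → ℂ}
    (hg_symm : ∀ μ ν, g μ ν = g ν μ)
    (hg_inv : ∀ μ ν, ∑ κ, g μ κ * ginv κ ν = if μ = ν then (1 : ℂ) else 0)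
    (hg_inv' : ∀ μ ν, ∑ κ, ginv μ κ * g κ ν = if μ = ν then (1 : ℂ) else 0)
    {γ : Fin n → Matrix (Fin N) (Fin N) ℂ}
    {σ : Fin n → Fin n → Matrix (Fin N) (Fin N) ℂ}
    (hσ_anti : ∀ α β, σ α β = - σ β α)
    (hconst : ∀ μ s b, σ s b * γ μ - γ μ * σ s b = g μ b • γ s - g μ s • γ b)
    (hanti : ∀ μ s b, (γ μ * σ s b + σ s b * γ μ) + (γ s * σ μ b + σ μ b * γ s) = 0)
    (β : Fin n) :
    (2 : ℂ) • ∑ ν, σ β ν * (∑ ρ, ginv ν ρ • γ ρ) = ((n : ℂ) - 1) • γ β := by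
  have hsymm := ginv_symm hg_symm hg_inv
  have hdiff : ∑ ν, σ β ν * (∑ ρ, ginv ν ρ • γ ρ) - ∑ ν, (∑ ρ, ginv ν ρ • γ ρ) * σ β ν
      = ((n : ℂ) - 1) • γ β := by
    have h : ∀ ν, σ β ν * (∑ ρ, ginv ν ρ • γ ρ) - (∑ ρ, ginv ν ρ • γ ρ) * σ β ν
        = γ β - (if ν = β then (1 : ℂ) else 0) • γ ν := by
      intro ν
      rw [← hg_inv' ν β, Finset.mul_sum, Finset.sum_mul, ← Finset.sum_sub_distrib]
      have h1 : ∑ ρ, (ginv ν ρ * g ρ ν) • γ β = γ β := by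
        rw [← Finset.sum_smul, hg_inv' ν ν]
        simp
      conv_rhs => rw [← h1]
      rw [Finset.sum_smul, ← Finset.sum_sub_distrib]
      refine Finset.sum_congr rfl fun ρ _ => ?_
      rw [mul_smul_comm, smul_mul_assoc, ← smul_sub, hconst, smul_sub, smul_smul, smul_smul]
    rw [← Finset.sum_sub_distrib, Finset.sum_congr rfl fun ν _ => h ν, Finset.sum_sub_distrib]
    simp [sub_smul, Nat.cast_smul_eq_nsmul]
  have hsum : ∑ ν, σ β ν * (∑ ρ, ginv ν ρ • γ ρ) + ∑ ν, (∑ ρ, ginv ν ρ • γ ρ) * σ β ν = 0 := by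
    have hT : ∀ μ ν, γ ν * σ β μ + σ β μ * γ ν = -(γ μ * σ β ν + σ β ν * γ μ) := by
      intro μ ν
      have h1 := hanti ν β μ
      have h2 := hanti μ β ν
      rw [hσ_anti ν μ] at h1
      rw [eq_neg_iff_add_eq_zero]
      have h3 := congrArg₂ (· + ·) h1 h2
      simp only [mul_neg, neg_mul, add_zero] at h3
      rw [← h3]
      abel
    have h : ∑ ν, σ β ν * (∑ ρ, ginv ν ρ • γ ρ) + ∑ ν, (∑ ρ, ginv ν ρ • γ ρ) * σ β ν
        = ∑ ν, ∑ ρ, ginv ν ρ • (γ ρ * σ β ν + σ β ν * γ ρ) := by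
      rw [← Finset.sum_add_distrib]
      refine Finset.sum_congr rfl fun ν _ => ?_
      rw [Finset.mul_sum, Finset.sum_mul, ← Finset.sum_add_distrib]
      refine Finset.sum_congr rfl fun ρ _ => ?_
      rw [mul_smul_comm, smul_mul_assoc, ← smul_add, add_comm]
    rw [h]
    -- Exchanging the summation indices shows that the double sum is its own negative.
    suffices hneg : ∑ ν, ∑ ρ, ginv ν ρ • (γ ρ * σ β ν + σ β ν * γ ρ)
        = -∑ ν, ∑ ρ, ginv ν ρ • (γ ρ * σ β ν + σ β ν * γ ρ) by
      have h2 := eq_neg_iff_add_eq_zero.mp hneg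
      rw [← two_smul ℂ] at h2
      exact (smul_eq_zero.mp h2).resolve_left two_ne_zero
    conv_lhs => rw [Finset.sum_comm]
    simp only [← Finset.sum_neg_distrib, ← smul_neg]
    refine Finset.sum_congr rfl fun ν _ => Finset.sum_congr rfl fun ρ _ => ?_
    rw [hsymm ρ ν, hT ρ ν]
  rw [two_smul, ← hdiff, eq_sub_iff_add_eq, add_assoc, hsum, add_zero]

theorem stmt_4
    (n N : ℕ) (hn : 1 ≤ n) (hN : 1 ≤ N)
    (g ginv : Fin n → Fin n → ℂ)
    (hg_symm : ∀ μ ν, g μ ν = g ν μ)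
    (hg_inv : ∀ μ ν, ∑ κ, g μ κ * ginv κ ν = if μ = ν then (1 : ℂ) else 0)
    (hg_inv' : ∀ μ ν, ∑ κ, ginv μ κ * g κ ν = if μ = ν then (1 : ℂ) else 0)
    (γ : Fin n → Matrix (Fin N) (Fin N) ℂ)
    (σ : Fin n → Fin n → Matrix (Fin N) (Fin N) ℂ)
    (hσ_anti : ∀ α β, σ α β = - σ β α)
    (hconst : ∀ μ s b, σ s b * γ μ - γ μ * σ s b = g μ b • γ s - g μ s • γ b)
    (hanti : ∀ μ s b, (γ μ * σ s b + σ s b * γ μ) + (γ s * σ μ b + σ μ b * γ s) = 0) :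
    ∀ α β : Fin n,
      ((n : ℂ) - 2) • (γ β * γ α - γ α * γ β) =
        (∑ ν, σ β ν * ((∑ ρ, ginv ν ρ • γ ρ) * γ α - γ α * (∑ ρ, ginv ν ρ • γ ρ)))
          - (∑ ν, σ α ν * ((∑ ρ, ginv ν ρ • γ ρ) * γ β - γ β * (∑ ρ, ginv ν ρ • γ ρ))) := by
  intro α β
  have hA := two_smul_contraction hg_symm hg_inv hg_inv' hσ_anti hconst hanti
  have hG := raise_lower hg_inv γ
  generalize hL : (fun ν => ∑ ρ, ginv ν ρ • γ ρ) = L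
  have hL' : ∀ ν, ∑ ρ, ginv ν ρ • γ ρ = L ν := fun ν => congrFun hL ν
  simp only [hL'] at hA hG ⊢
  have hA' : ∀ β, ∑ ν, σ β ν * L ν = (((n : ℂ) - 1) / 2) • γ β := by
    intro β
    rw [div_eq_inv_mul, mul_smul, ← hA β, smul_smul]
    norm_num
  -- The constancy condition antisymmetrized in `α` and `β`: the terms in `g α β` cancel.
  have hpt : ∀ ν, σ β ν * γ α - σ α ν * γ β
      = γ α * σ β ν - γ β * σ α ν + g α ν • γ β - g β ν • γ α := by
    intro ν
    have h1 := hconst α β ν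
    have h2 := hconst β α ν
    rw [hg_symm β α] at h2
    rw [sub_eq_iff_eq_add] at h1 h2
    rw [h1, h2]
    abel
  have hterm : ∀ ν, σ β ν * (L ν * γ α - γ α * L ν) - σ α ν * (L ν * γ β - γ β * L ν)
      = σ β ν * L ν * γ α - σ α ν * L ν * γ β
        - (γ α * (σ β ν * L ν) - γ β * (σ α ν * L ν)
          + γ β * (g α ν • L ν) - γ α * (g β ν • L ν)) := by
    intro ν
    have h := congrArg (· * L ν) (hpt ν)
    simp only [sub_mul, add_mul, smul_mul_assoc] at h
    simp only [mul_smul_comm, mul_sub, ← mul_assoc] at h ⊢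
    rw [← h]
    abel
  rw [← Finset.sum_sub_distrib, Finset.sum_congr rfl fun ν _ => hterm ν]
  simp only [Finset.sum_sub_distrib, Finset.sum_add_distrib, ← Finset.sum_mul, ← Finset.mul_sum,
    hA', hG]
  simp only [smul_mul_assoc, mul_smul_comm]
  module
end
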